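/- Let p be a natural number with p > 1. Every multiplier on the discrete abelian group ℤ[1/p] × ℤ[1/p] is cohomologous to Ψ_α for some α ∈ Ξ_p; moreover, for α, β ∈ Ξ_p, the pointwise product Ψ_α·Ψ_β is cohomologous to Ψ_γ, where γ_n = α_n + β_n mod 1 (so that γ ∈ Ξ_p is the sum of α and β in the group Ξ_p under pointwise addition modulo 1). -/

import Mathlib

/-!
A symmetric cocycle with values in a divisible group `M` is a coboundary, because the abelian
extension by `M` it defines splits. A cocycle is therefore determined up to coboundaries by its
commutator `c g h - c h g`, an alternating bihomomorphism. On `A × B` with `A` and `B` locally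
cyclic, such as `ℤ[1/p] × ℤ[1/p]`, an alternating bihomomorphism vanishes on `A` and on `B`, so
only the pairing `b : A → B → M` survives and `c` is cohomologous to `(g, h) ↦ b g.1 h.2`. For
`ℤ[1/p]` the pairing is determined by the values `b 1 (1 / p ^ n)`, each of which is the `p`-th
power of the next: they are `exp (2πi α_n)` for some `α` in `Ξ_p`.
-/

open scoped Real

/-- The additive subgroup `ℤ[1/p]` of `ℚ` of `p`-adic rationals. -/
def pAdicRat (p : ℕ) : AddSubgroup ℚ where
  carrier := {r : ℚ | ∃ (z : ℤ) (k : ℕ), r * (p : ℚ) ^ k = z}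
  zero_mem' := ⟨0, 0, by simp⟩
  add_mem' := by
    rintro a b ⟨z1, k1, h1⟩ ⟨z2, k2, h2⟩
    refine ⟨z1 * (p : ℤ) ^ k2 + z2 * (p : ℤ) ^ k1, k1 + k2, ?_⟩
    push_cast
    calc (a + b) * (p : ℚ) ^ (k1 + k2)
        = (a * (p : ℚ) ^ k1) * (p : ℚ) ^ k2 + (b * (p : ℚ) ^ k2) * (p : ℚ) ^ k1 := by
          rw [pow_add]; ring
      _ = (z1 : ℚ) * (p : ℚ) ^ k2 + (z2 : ℚ) * (p : ℚ) ^ k1 := by rw [h1, h2]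
  neg_mem' := by
    rintro a ⟨z, k, h⟩
    exact ⟨-z, k, by push_cast; rw [neg_mul, h]⟩

lemma pAdicElem_mem (p : ℕ) (q : ℤ) (k : ℕ) : ((q : ℚ) / (p : ℚ) ^ k) ∈ pAdicRat p := by
  rcases Nat.eq_zero_or_pos p with h | h
  · exact ⟨0, 1, by simp [h]⟩
  · refine ⟨q, k, ?_⟩
    have : ((p : ℚ)) ^ k ≠ 0 := by positivity
    field_simp

/-- The element `q / p^k` of `ℤ[1/p]`. -/
def pAdicElem (p : ℕ) (q : ℤ) (k : ℕ) : pAdicRat p :=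
  ⟨(q : ℚ) / (p : ℚ) ^ k, pAdicElem_mem p q k⟩

/-- The set `Ξ_p` of sequences `α` with `α n ∈ [0,1)` and `p α_{n+1} ≡ α_n mod 1`,
with `p α_{n+1} - α_n ∈ {0, …, p-1}`. -/
def XiSeq (p : ℕ) (α : ℕ → ℝ) : Prop :=
  (∀ n, α n ∈ Set.Ico (0 : ℝ) 1) ∧ ∀ n, ∃ j : ℕ, j < p ∧ (p : ℝ) * α (n + 1) - α n = j

/-- A `𝕋`-valued multiplier (normalized 2-cocycle) on a discrete abelian group. -/
def IsMultiplier {G : Type*} [AddCommGroup G] (σ : G → G → Circle) : Prop :=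
  (∀ g h k : G, σ g h * σ (g + h) k = σ g (h + k) * σ h k) ∧
    ∀ g : G, σ g 0 = 1 ∧ σ 0 g = 1

/-- Two multipliers are cohomologous when they differ by a coboundary. -/
def AreCohomologous {G : Type*} [AddCommGroup G] (σ σ' : G → G → Circle) : Prop :=
  ∃ f : G → Circle, ∀ g h : G, σ g h = f g * f h * (f (g + h))⁻¹ * σ' g h

/-- The defining formula for the multiplier `Ψ_α` on `ℤ[1/p] × ℤ[1/p]`. -/
def PsiFormula (p : ℕ) (α : ℕ → ℝ)
    (Ψ : (pAdicRat p × pAdicRat p) → (pAdicRat p × pAdicRat p) → Circle) : Prop :=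
  ∀ (q1 q2 q3 q4 : ℤ) (k1 k2 k3 k4 : ℕ),
    Ψ (pAdicElem p q1 k1, pAdicElem p q2 k2) (pAdicElem p q3 k3, pAdicElem p q4 k4)
      = Circle.exp (2 * π * (α (k1 + k4) * q1 * q4))

section Cocycles

variable {G M : Type*} [AddCommGroup G] [AddCommGroup M]

/-- A 2-cocycle, written additively, of an abelian group `G` with values in the trivial `G`-module
`M`. Unlike `IsMultiplier`, this does not include the normalization `c g 0 = c 0 g = 0`. -/
def IsCocycle (c : G → G → M) : Prop :=
  ∀ g h k, c g h + c (g + h) k = c g (h + k) + c h k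

/-- A symmetric 2-cocycle, that is, one whose associated extension of `G` by `M` is abelian. -/
structure IsSymmCocycle (c : G → G → M) : Prop where
  isCocycle : IsCocycle c
  symm : ∀ g h, c g h = c h g

/-- A 2-coboundary, with the sign convention of `AreCohomologous`. -/
def IsCoboundary (c : G → G → M) : Prop :=
  ∃ f : G → M, ∀ g h, c g h = f g + f h - f (g + h)

namespace IsCocycle

variable {c d : G → G → M}

theorem apply_zero_left (hc : IsCocycle c) (g : G) : c 0 g = c 0 0 := by
  simpa using (hc 0 0 g).symm

theorem apply_zero_right (hc : IsCocycle c) (g : G) : c g 0 = c 0 0 := by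
  simpa using hc g 0 0

theorem sub (hc : IsCocycle c) (hd : IsCocycle d) : IsCocycle fun g h => c g h - d g h := by
  intro g h k
  simp only [sub_add_sub_comm, hc g h k, hd g h k]

theorem of_bilin (b : G →ₗ[ℤ] G →ₗ[ℤ] M) : IsCocycle fun g h => b g h := by
  intro g h k
  simp only [map_add, LinearMap.add_apply]
  abel

theorem commutator_add_left (hc : IsCocycle c) (g h k : G) :
    c (g + h) k - c k (g + h) = (c g k - c k g) + (c h k - c k h) := by
  have hghk := hc g h k
  have hkgh := hc k g h
  have hgkh := hc g k h
  rw [add_comm k h, add_comm g k] at hgkh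
  grind

/-- The commutator pairing of a cocycle: it records the commutators of lifts of elements of `G` to
the central extension defined by the cocycle. -/
def commutator (hc : IsCocycle c) : G →ₗ[ℤ] G →ₗ[ℤ] M :=
  (AddMonoidHom.mk' (fun g => (AddMonoidHom.mk' (fun h => c g h - c h g) fun h k => by
      linear_combination (norm := abel) -hc.commutator_add_left h k g).toIntLinearMap) fun g h => by
    ext k
    exact hc.commutator_add_left g h k).toIntLinearMap

theorem commutator_apply (hc : IsCocycle c) (g h : G) : hc.commutator g h = c g h - c h g := rfl

theorem isAlt_commutator (hc : IsCocycle c) : hc.commutator.IsAlt := fun g => sub_self (c g g)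

end IsCocycle

namespace IsSymmCocycle

variable {c : G → G → M}

/-- The abelian extension of `G` by `M` defined by a symmetric cocycle, with underlying set
`G × M`. Since the cocycle need not be normalized, the neutral element is `(0, -c 0 0)`. -/
@[ext]
structure Extension (_hc : IsSymmCocycle c) where
  base : G
  fiber : M

namespace Extension

variable {hc : IsSymmCocycle c}

instance : Add hc.Extension := ⟨fun x y => ⟨x.base + y.base, x.fiber + y.fiber + c x.base y.base⟩⟩

instance : Zero hc.Extension := ⟨⟨0, -c 0 0⟩⟩

instance : Neg hc.Extension := ⟨fun x => ⟨-x.base, -x.fiber - c x.base (-x.base) - c 0 0⟩⟩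

theorem add_def (x y : hc.Extension) :
    x + y = ⟨x.base + y.base, x.fiber + y.fiber + c x.base y.base⟩ := rfl

theorem zero_def : (0 : hc.Extension) = ⟨0, -c 0 0⟩ := rfl

theorem neg_def (x : hc.Extension) :
    -x = ⟨-x.base, -x.fiber - c x.base (-x.base) - c 0 0⟩ := rfl

protected theorem add_comm (x y : hc.Extension) : x + y = y + x := by
  simp only [add_def, add_comm x.base, add_comm x.fiber, hc.symm x.base]

protected theorem add_assoc (x y z : hc.Extension) : x + y + z = x + (y + z) := by
  simp only [add_def, mk.injEq]
  refine ⟨add_assoc .., ?_⟩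
  linear_combination (norm := abel) hc.isCocycle x.base y.base z.base

protected theorem zero_add (x : hc.Extension) : 0 + x = x := by
  simp [add_def, zero_def, hc.isCocycle.apply_zero_left]

protected theorem neg_add_cancel (x : hc.Extension) : -x + x = 0 := by
  simp only [add_def, neg_def, zero_def, mk.injEq, neg_add_cancel, hc.symm (-x.base), true_and]
  abel

instance : AddCommGroup hc.Extension where
  add_assoc := Extension.add_assoc
  zero_add := Extension.zero_add
  add_zero x := (Extension.add_comm x 0).trans x.zero_add
  nsmul := nsmulRec
  zsmul := zsmulRec
  neg_add_cancel := Extension.neg_add_cancel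
  add_comm := Extension.add_comm

/-- The embedding of `M` as the kernel of the extension; the shift by `c 0 0` makes it additive when
the cocycle is not normalized. -/
def inclusion (hc : IsSymmCocycle c) : M →+ hc.Extension :=
  AddMonoidHom.mk' (fun m => ⟨0, m - c 0 0⟩) fun m n => by
    simp only [add_def, mk.injEq, add_zero, true_and]
    abel

theorem inclusion_injective : Function.Injective (inclusion hc) := fun m n h => by
  simpa [inclusion] using h

theorem mk_add_mk (g h : G) :
    (⟨g, 0⟩ + ⟨h, 0⟩ : hc.Extension) = ⟨g + h, 0⟩ + inclusion hc (c g h) := by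
  simp [add_def, inclusion, hc.isCocycle.apply_zero_right]

end Extension

open Extension in
theorem isCoboundary [DivisibleBy M ℤ] (hc : IsSymmCocycle c) : IsCoboundary c := by
  obtain ⟨r, hr⟩ := (Module.Baer.of_divisible M).extension_property_addMonoidHom
    (inclusion hc) inclusion_injective (AddMonoidHom.id M)
  refine ⟨fun g => r ⟨g, 0⟩, fun g h => ?_⟩
  have hr_inclusion : r (inclusion hc (c g h)) = c g h := DFunLike.congr_fun hr (c g h)
  rw [← map_add, mk_add_mk, map_add, hr_inclusion, add_sub_cancel_left]

end IsSymmCocycle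

end Cocycles

section LocallyCyclic

variable {R A B M : Type*} [CommRing R] [AddCommGroup A] [AddCommGroup B] [AddCommGroup M]
  [Module R A] [Module R B] [Module R M]

variable (R A) in
/-- A module is *locally cyclic* if its finitely generated submodules are contained in cyclic ones;
for this it suffices to consider two generators. -/
def IsLocallyCyclic : Prop :=
  ∀ x y : A, ∃ u : A, x ∈ Submodule.span R {u} ∧ y ∈ Submodule.span R {u}

theorem IsLocallyCyclic.eq_zero_of_isAlt (hA : IsLocallyCyclic R A) {T : A →ₗ[R] A →ₗ[R] M}
    (hT : T.IsAlt) : T = 0 := by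
  ext x y
  obtain ⟨u, hx, hy⟩ := hA x y
  obtain ⟨m, rfl⟩ := Submodule.mem_span_singleton.1 hx
  obtain ⟨n, rfl⟩ := Submodule.mem_span_singleton.1 hy
  simp [hT.self_eq_zero u]

theorem isAlt_prod_apply (hA : IsLocallyCyclic R A) (hB : IsLocallyCyclic R B)
    {T : A × B →ₗ[R] A × B →ₗ[R] M} (hT : T.IsAlt) (g h : A × B) :
    T g h = T (g.1, 0) (0, h.2) - T (h.1, 0) (0, g.2) := by
  have h_left : T (g.1, 0) (h.1, 0) = 0 :=
    LinearMap.congr_fun₂ (hA.eq_zero_of_isAlt (T := T.compl₁₂ (.inl R A B) (.inl R A B))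
      fun a => hT (a, 0)) g.1 h.1
  have h_right : T (0, g.2) (0, h.2) = 0 :=
    LinearMap.congr_fun₂ (hB.eq_zero_of_isAlt (T := T.compl₁₂ (.inr R A B) (.inr R A B))
      fun b => hT (0, b)) g.2 h.2
  calc T g h = T ((g.1, 0) + (0, g.2)) ((h.1, 0) + (0, h.2)) := by simp
    _ = T (0, g.2) (h.1, 0) + T (g.1, 0) (0, h.2) := by
      simp only [map_add, LinearMap.add_apply, h_left, h_right, zero_add, add_zero]
    _ = T (g.1, 0) (0, h.2) - T (h.1, 0) (0, g.2) := by
      rw [← hT.neg (h.1, 0), neg_add_eq_sub]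

theorem IsCocycle.exists_isCoboundary_sub_bilin [DivisibleBy M ℤ] (hA : IsLocallyCyclic ℤ A)
    (hB : IsLocallyCyclic ℤ B) {c : A × B → A × B → M} (hc : IsCocycle c) :
    ∃ b : A →ₗ[ℤ] B →ₗ[ℤ] M, IsCoboundary fun g h => c g h - b g.1 h.2 := by
  refine ⟨hc.commutator.compl₁₂ (.inl ℤ A B) (.inr ℤ A B), IsSymmCocycle.isCoboundary ⟨?_, ?_⟩⟩
  · exact hc.sub (.of_bilin ((hc.commutator.compl₁₂ (.inl ℤ A B) (.inr ℤ A B)).compl₁₂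
      (.fst ℤ A B) (.snd ℤ A B)))
  · intro g h
    have h_comm := isAlt_prod_apply hA hB hc.isAlt_commutator g h
    rw [hc.commutator_apply g h] at h_comm
    exact sub_eq_sub_iff_sub_eq_sub.2 h_comm

end LocallyCyclic

section CircleValued

noncomputable instance : DivisibleBy (Additive Circle) ℤ :=
  Function.Surjective.divisibleBy Circle.expHom Circle.exp_surjective fun x n =>
    Circle.expHom.map_zsmul n x

theorem AreCohomologous.refl {G : Type*} [AddCommGroup G] (σ : G → G → Circle) :
    AreCohomologous σ σ :=
  ⟨fun _ => 1, by simp⟩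

theorem IsMultiplier.exists_areCohomologous_bilin {A B : Type*} [AddCommGroup A] [AddCommGroup B]
    (hA : IsLocallyCyclic ℤ A) (hB : IsLocallyCyclic ℤ B) {σ : A × B → A × B → Circle}
    (hσ : IsMultiplier σ) :
    ∃ b : A →ₗ[ℤ] B →ₗ[ℤ] Additive Circle,
      AreCohomologous σ fun g h => (b g.1 h.2).toMul := by
  have hc : IsCocycle fun g h => Additive.ofMul (σ g h) := hσ.1
  obtain ⟨b, f, hf⟩ := hc.exists_isCoboundary_sub_bilin hA hB
  refine ⟨b, fun g => (f g).toMul, fun g h => ?_⟩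
  have h_eq : Additive.ofMul (σ g h) = f g + f h - f (g + h) + b g.1 h.2 :=
    sub_eq_iff_eq_add.1 (hf g h)
  simpa [div_eq_mul_inv] using congrArg Additive.toMul h_eq

end CircleValued

section PAdicRationals

variable {p : ℕ}

theorem zsmul_pAdicElem (m q : ℤ) (k : ℕ) : m • pAdicElem p q k = pAdicElem p (m * q) k :=
  Subtype.ext (by simp [pAdicElem, mul_div_assoc])

theorem pow_zsmul_pAdicElem_add (hp : 0 < p) (q : ℤ) (k j : ℕ) :
    (p ^ j : ℤ) • pAdicElem p q (k + j) = pAdicElem p q k := by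
  have hp' : (p : ℚ) ≠ 0 := by positivity
  apply Subtype.ext
  simp only [pAdicElem, AddSubgroup.coe_zsmul, zsmul_eq_mul]
  push_cast
  rw [pow_add, mul_div_assoc', mul_comm _ (p ^ j : ℚ), mul_div_mul_left _ _ (pow_ne_zero j hp')]

theorem exists_eq_pAdicElem (hp : 0 < p) (x : pAdicRat p) : ∃ q k, x = pAdicElem p q k := by
  obtain ⟨x, q, k, hx⟩ := x
  have hp' : (p : ℚ) ^ k ≠ 0 := by positivity
  exact ⟨q, k, Subtype.ext (eq_div_of_mul_eq hp' hx)⟩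

theorem pAdicElem_mem_span (hp : 0 < p) (q : ℤ) (k j : ℕ) :
    pAdicElem p q k ∈ Submodule.span ℤ {pAdicElem p 1 (k + j)} := by
  refine Submodule.mem_span_singleton.2 ⟨p ^ j * q, ?_⟩
  rw [mul_smul, zsmul_pAdicElem, mul_one, pow_zsmul_pAdicElem_add hp]

theorem isLocallyCyclic_pAdicRat (hp : 0 < p) : IsLocallyCyclic ℤ (pAdicRat p) := by
  intro x y
  obtain ⟨q, k, rfl⟩ := exists_eq_pAdicElem hp x
  obtain ⟨r, l, rfl⟩ := exists_eq_pAdicElem hp y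
  exact ⟨pAdicElem p 1 (k + l), pAdicElem_mem_span hp q k l,
    add_comm k l ▸ pAdicElem_mem_span hp r l k⟩

theorem bilin_pAdicElem {M : Type*} [AddCommGroup M] (hp : 0 < p)
    (b : pAdicRat p →ₗ[ℤ] pAdicRat p →ₗ[ℤ] M) (q r : ℤ) (k l : ℕ) :
    b (pAdicElem p q k) (pAdicElem p r l) =
      (q * r) • b (pAdicElem p 1 0) (pAdicElem p 1 (k + l)) := by
  have h_left : pAdicElem p q k = q • pAdicElem p 1 k := by rw [zsmul_pAdicElem, mul_one]
  have h_right : pAdicElem p r l = r • (p ^ k : ℤ) • pAdicElem p 1 (k + l) := by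
    rw [add_comm k l, pow_zsmul_pAdicElem_add hp, zsmul_pAdicElem, mul_one]
  have h_one : (p ^ k : ℤ) • pAdicElem p 1 k = pAdicElem p 1 0 := by
    simpa using pow_zsmul_pAdicElem_add hp 1 0 k
  rw [h_left, h_right, ← h_one]
  simp only [map_smul, LinearMap.smul_apply, smul_smul]
  ring_nf

end PAdicRationals

section RootSequences

open scoped FourierTransform

variable {p : ℕ} {α β : ℕ → ℝ}

theorem fourierChar_eq_fourierChar_iff {x y : ℝ} : 𝐞 x = 𝐞 y ↔ ∃ m : ℤ, x - y = m := by
  rw [Real.fourierChar_apply', Real.fourierChar_apply', Circle.exp_eq_exp]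
  refine exists_congr fun m => ?_
  rw [← mul_right_inj' Real.two_pi_pos.ne' (b := x - y)]
  constructor <;> intro h <;> linear_combination h

theorem fourierChar_fract (x : ℝ) : 𝐞 (Int.fract x) = 𝐞 x :=
  fourierChar_eq_fourierChar_iff.2 ⟨-⌊x⌋, by rw [Int.fract, Int.cast_neg]; ring⟩

theorem exists_mem_Ico_fourierChar_eq (z : Circle) : ∃ x ∈ Set.Ico (0 : ℝ) 1, 𝐞 x = z := by
  obtain ⟨t, rfl⟩ := Circle.exp_surjective z
  refine ⟨Int.fract (t / (2 * π)), ⟨Int.fract_nonneg _, Int.fract_lt_one _⟩, ?_⟩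
  rw [fourierChar_fract, Real.fourierChar_apply', mul_div_cancel₀ _ Real.two_pi_pos.ne']

theorem fourierChar_pow_eq_iff {x y : ℝ} :
    𝐞 y ^ p = 𝐞 x ↔ ∃ m : ℤ, p * y - x = m := by
  rw [← AddChar.map_nsmul_eq_pow, nsmul_eq_mul, fourierChar_eq_fourierChar_iff]

theorem xiSeq_iff_fourierChar_pow (hp : 0 < p) :
    XiSeq p α ↔ (∀ n, α n ∈ Set.Ico (0 : ℝ) 1) ∧ ∀ n, 𝐞 (α (n + 1)) ^ p = 𝐞 (α n) := by
  refine and_congr_right fun hα => forall_congr' fun n => ?_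
  rw [fourierChar_pow_eq_iff]
  refine ⟨fun ⟨j, _, hj⟩ => ⟨j, by simpa using hj⟩, fun ⟨m, hm⟩ => ?_⟩
  obtain ⟨h_nonneg, h_lt_one⟩ := hα n
  obtain ⟨h_nonneg', h_lt_one'⟩ := hα (n + 1)
  have hp' : (0 : ℝ) < p := by exact_mod_cast hp
  have hm_gt : -1 < m := by
    have : (-1 : ℝ) < m := by rw [← hm]; nlinarith
    exact_mod_cast this
  have hm_lt : m < p := by
    have : (m : ℝ) < p := by rw [← hm]; nlinarith
    exact_mod_cast this
  lift m to ℕ using by lia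
  exact ⟨m, by exact_mod_cast hm_lt, by simpa using hm⟩

theorem XiSeq.fract_add (hp : 0 < p) (hα : XiSeq p α) (hβ : XiSeq p β) :
    XiSeq p fun n => Int.fract (α n + β n) := by
  rw [xiSeq_iff_fourierChar_pow hp] at hα hβ ⊢
  refine ⟨fun n => ⟨Int.fract_nonneg _, Int.fract_lt_one _⟩, fun n => ?_⟩
  simp only [fourierChar_fract, AddChar.map_add_eq_mul, mul_pow, hα.2 n, hβ.2 n]

end RootSequences

section Psi

open scoped FourierTransform

variable {p : ℕ} {α β : ℕ → ℝ} {Ψ Φ : pAdicRat p × pAdicRat p → pAdicRat p × pAdicRat p → Circle}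

theorem psiFormula_iff_fourierChar_zpow :
    PsiFormula p α Ψ ↔ ∀ (q₁ q₂ q₃ q₄ : ℤ) (k₁ k₂ k₃ k₄ : ℕ),
      Ψ (pAdicElem p q₁ k₁, pAdicElem p q₂ k₂) (pAdicElem p q₃ k₃, pAdicElem p q₄ k₄) =
        𝐞 (α (k₁ + k₄)) ^ (q₁ * q₄) := by
  have h_exp (x : ℝ) (q r : ℤ) : 𝐞 x ^ (q * r) = Circle.exp (2 * π * (x * q * r)) := by
    rw [← AddChar.map_zsmul_eq_zpow, Real.fourierChar_apply', zsmul_eq_mul]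
    push_cast
    ring_nf
  simp only [h_exp, PsiFormula]

theorem PsiFormula.mul (hΨ : PsiFormula p α Ψ) (hΦ : PsiFormula p β Φ) :
    PsiFormula p (fun n => Int.fract (α n + β n)) fun x y => Ψ x y * Φ x y := by
  rw [psiFormula_iff_fourierChar_zpow] at hΨ hΦ ⊢
  simp only [hΨ, hΦ, fourierChar_fract, AddChar.map_add_eq_mul, mul_zpow, implies_true]

theorem PsiFormula.unique (hp : 0 < p) (hΨ : PsiFormula p α Ψ) (hΦ : PsiFormula p α Φ) :
    Ψ = Φ := by
  funext ⟨x₁, x₂⟩ ⟨x₃, x₄⟩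
  obtain ⟨q₁, k₁, rfl⟩ := exists_eq_pAdicElem hp x₁
  obtain ⟨q₂, k₂, rfl⟩ := exists_eq_pAdicElem hp x₂
  obtain ⟨q₃, k₃, rfl⟩ := exists_eq_pAdicElem hp x₃
  obtain ⟨q₄, k₄, rfl⟩ := exists_eq_pAdicElem hp x₄
  rw [hΨ, hΦ]

theorem exists_xiSeq_psiFormula_bilin (hp : 0 < p)
    (b : pAdicRat p →ₗ[ℤ] pAdicRat p →ₗ[ℤ] Additive Circle) :
    ∃ γ, XiSeq p γ ∧ PsiFormula p γ fun g h => (b g.1 h.2).toMul := by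
  choose γ hγ_mem hγ using fun n =>
    exists_mem_Ico_fourierChar_eq (b (pAdicElem p 1 0) (pAdicElem p 1 n)).toMul
  refine ⟨γ, (xiSeq_iff_fourierChar_pow hp).2 ⟨hγ_mem, fun n => ?_⟩,
    psiFormula_iff_fourierChar_zpow.2 fun q₁ q₂ q₃ q₄ k₁ k₂ k₃ k₄ => ?_⟩
  · have h_root : (p : ℤ) • pAdicElem p 1 (n + 1) = pAdicElem p 1 n := by
      simpa using pow_zsmul_pAdicElem_add hp 1 n 1
    rw [hγ, hγ, ← h_root, map_smul, toMul_zsmul, zpow_natCast]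
  · rw [hγ, bilin_pAdicElem hp, toMul_zsmul]

end Psi

/-- For `p > 1`, every multiplier on `ℤ[1/p] × ℤ[1/p]` is cohomologous to
`Ψ_γ` for some `γ ∈ Ξ_p`; moreover, for `α, β ∈ Ξ_p` the pointwise product `Ψ_α · Ψ_β` is
cohomologous to `Ψ_γ` where `γ_n = α_n + β_n mod 1` (and this `γ` belongs to `Ξ_p`, being
the sum of `α` and `β` in the group `Ξ_p` under pointwise addition modulo one). -/
theorem multiplier_cohomologous_psi_and_product (p : ℕ) (hp : 1 < p) :
    (∀ σ : (pAdicRat p × pAdicRat p) → (pAdicRat p × pAdicRat p) → Circle,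
      IsMultiplier σ →
        ∃ γ : ℕ → ℝ, XiSeq p γ ∧
          ∃ Ψ : (pAdicRat p × pAdicRat p) → (pAdicRat p × pAdicRat p) → Circle,
            PsiFormula p γ Ψ ∧ AreCohomologous σ Ψ) ∧
    ∀ α β : ℕ → ℝ, XiSeq p α → XiSeq p β →
      XiSeq p (fun n => Int.fract (α n + β n)) ∧
      ∀ Ψα Ψβ Ψγ : (pAdicRat p × pAdicRat p) → (pAdicRat p × pAdicRat p) → Circle,
        PsiFormula p α Ψα → PsiFormula p β Ψβ →
        PsiFormula p (fun n => Int.fract (α n + β n)) Ψγ →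
        AreCohomologous (fun x y => Ψα x y * Ψβ x y) Ψγ := by
  have hp' : 0 < p := zero_lt_one.trans hp
  constructor
  · intro σ hσ
    obtain ⟨b, hb⟩ := hσ.exists_areCohomologous_bilin
      (isLocallyCyclic_pAdicRat hp') (isLocallyCyclic_pAdicRat hp')
    obtain ⟨γ, hγ, hΨ⟩ := exists_xiSeq_psiFormula_bilin hp' b
    exact ⟨γ, hγ, _, hΨ, hb⟩
  · intro α β hα hβ
    refine ⟨hα.fract_add hp' hβ, fun Ψα Ψβ Ψγ hΨα hΨβ hΨγ => ?_⟩
    rw [(hΨα.mul hΨβ).unique hp' hΨγ]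
    exact .refl Ψγ
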